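/- Let Γ be an uncountable index set and ℓ¹(Γ) the Banach space of functions x : Γ → ℝ with countable support and Σ_{α∈Γ} |x_α| < ∞, normed by ‖x‖ = Σ_α |x_α|. Then ℓ¹(Γ) has the Lebesgue property: every Riemann integrable function f : [a,b] → ℓ¹(Γ) is continuous almost everywhere on [a,b]. -/

import Mathlib

open Set MeasureTheory

/-- A tagged partition of `[a,b]`: points `a = t 0 < t 1 < ⋯ < t n = b`
with tags `s i ∈ [t i, t (i+1)]`. -/
structure TaggedPartition (a b : ℝ) where
  n : ℕ
  t : ℕ → ℝ
  s : ℕ → ℝ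
  npos : 0 < n
  left : t 0 = a
  right : t n = b
  mono : ∀ i < n, t i < t (i + 1)
  tag_mem : ∀ i < n, s i ∈ Set.Icc (t i) (t (i + 1))

/-- The mesh of the partition is `< δ`. -/
def TaggedPartition.MeshLT {a b : ℝ} (P : TaggedPartition a b) (δ : ℝ) : Prop :=
  ∀ i < P.n, P.t (i + 1) - P.t i < δ

/-- The set of partition points of a tagged partition. -/
def TaggedPartition.points {a b : ℝ} (P : TaggedPartition a b) : Set ℝ :=
  {x | ∃ i ≤ P.n, P.t i = x}

/-- The Riemann sum `f(Δ) = Σᵢ (tᵢ₊₁ - tᵢ) • f(sᵢ)`. -/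
def riemannSum {X : Type*} [AddCommGroup X] [Module ℝ X]
    (f : ℝ → X) {a b : ℝ} (P : TaggedPartition a b) : X :=
  ∑ i ∈ Finset.range P.n, (P.t (i + 1) - P.t i) • f (P.s i)

/-- `f` has Riemann integral `x` on `[a,b]` (mesh-based definition, metric `dist`). -/
def HasRiemannIntegral {X : Type*} [MetricSpace X] [AddCommGroup X] [Module ℝ X]
    (f : ℝ → X) (a b : ℝ) (x : X) : Prop :=
  ∀ ε > 0, ∃ δ > 0, ∀ P : TaggedPartition a b, P.MeshLT δ →
    dist (riemannSum f P) x < ε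

/-- A metric vector space `Z` has the Lebesgue property: every Riemann
integrable function `[a,b] → Z` is continuous almost everywhere. -/
def LebesgueProperty (Z : Type*) [MetricSpace Z] [AddCommGroup Z] [Module ℝ Z] : Prop :=
  ∀ (a b : ℝ), a < b → ∀ f : ℝ → Z, (∃ x, HasRiemannIntegral f a b x) →
    volume {t ∈ Set.Icc a b | ¬ ContinuousWithinAt f (Set.Icc a b) t} = 0


/-- Uniform tagged partition. -/
noncomputable def unifPart (a b : ℝ) (hab : a < b) (n : ℕ) (hn : 0 < n) (s : ℕ → ℝ)
    (hs : ∀ i < n, s i ∈ Set.Icc (a + i * ((b - a) / n)) (a + (i + 1 : ℕ) * ((b - a) / n))) :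
    TaggedPartition a b where
  n := n
  t := fun i => a + i * ((b - a) / n)
  s := s
  npos := hn
  left := by simp
  right := by
    have : (n : ℝ) ≠ 0 := by positivity
    field_simp
    ring
  mono := by
    intro i _
    have : 0 < (b - a) / n := div_pos (sub_pos.2 hab) (by positivity)
    push_cast
    nlinarith
  tag_mem := hs

/-- The greedy choice. -/
lemma greedy_choice {X : Type*} [NormedAddCommGroup X]
    (f : ℝ → X) (D : Set ℝ) (c : ℝ)
    (H : ∀ S : X, ∀ᵐ t, t ∈ D → ∀ r > 0, ∃ s s' : ℝ, |s - t| < r ∧ |s' - t| < r ∧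
      ‖S‖ + c ≤ ‖S + (f s - f s')‖)
    (u v : ℕ → ℝ) (huv : ∀ i, u i < v i) (G : Finset ℕ)
    (hG : ∀ i ∈ G, volume (D ∩ Icc (u i) (v i)) ≠ 0) :
    ∃ s s' : ℕ → ℝ, (∀ i, s i ∈ Icc (u i) (v i)) ∧ (∀ i, s' i ∈ Icc (u i) (v i)) ∧
      (∀ i, i ∉ G → s i = s' i) ∧ G.card * c ≤ ‖∑ i ∈ G, (f (s i) - f (s' i))‖ := by
  classical
  induction G using Finset.induction_on with
  | empty =>
    exact ⟨u, u, fun i => left_mem_Icc.2 (huv i).le, fun i => left_mem_Icc.2 (huv i).le,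
      fun _ _ => rfl, by simp⟩
  | insert j G hj ih =>
    obtain ⟨s, s', h1, h2, h3, h4⟩ := ih (fun i hi => hG i (Finset.mem_insert_of_mem hi))
    have hN := H (∑ i ∈ G, (f (s i) - f (s' i)))
    have hpos := hG j (Finset.mem_insert_self _ _)
    obtain ⟨t, htD, htI, ht⟩ : ∃ t, t ∈ D ∧ t ∈ Ioo (u j) (v j) ∧ ∀ r > 0, ∃ p q : ℝ,
        |p - t| < r ∧ |q - t| < r ∧ ‖∑ i ∈ G, (f (s i) - f (s' i))‖ + c ≤
          ‖∑ i ∈ G, (f (s i) - f (s' i)) + (f p - f q)‖ := by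
      by_contra! hcon
      apply hpos
      have hae : ∀ᵐ t, t ∉ D ∩ Icc (u j) (v j) := by
        have e1 : ∀ᵐ t : ℝ, t ≠ u j := by simp [ae_iff]
        have e2 : ∀ᵐ t : ℝ, t ≠ v j := by simp [ae_iff]
        filter_upwards [hN, e1, e2] with t ht h1 h2 hmem
        obtain ⟨r, hr, hh⟩ := hcon t hmem.1
          ⟨lt_of_le_of_ne hmem.2.1 (Ne.symm h1), lt_of_le_of_ne hmem.2.2 h2⟩
        obtain ⟨p, q, hp, hq, hpq⟩ := ht hmem.1 r hr
        exact absurd hpq (not_le.2 (hh p q hp hq))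
      exact measure_eq_zero_iff_ae_notMem.2 hae
    obtain ⟨p, q, hp, hq, hpq⟩ := ht (min (t - u j) (v j - t))
      (lt_min (sub_pos.2 htI.1) (sub_pos.2 htI.2))
    rw [lt_min_iff, abs_lt, abs_lt] at hp hq
    refine ⟨Function.update s j p, Function.update s' j q, ?_, ?_, ?_, ?_⟩
    · intro i
      by_cases hi : i = j
      · subst hi
        simp only [Function.update_self]
        exact ⟨by linarith, by linarith⟩
      · simpa [hi] using h1 i
    · intro i
      by_cases hi : i = j
      · subst hi
        simp only [Function.update_self]
        exact ⟨by linarith, by linarith⟩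
      · simpa [hi] using h2 i
    · intro i hi
      rw [Finset.mem_insert, not_or] at hi
      simpa [hi.1] using h3 i hi.2
    · rw [Finset.sum_insert hj, Finset.card_insert_of_notMem hj]
      have : ∑ i ∈ G, (f (Function.update s j p i) - f (Function.update s' j q i))
          = ∑ i ∈ G, (f (s i) - f (s' i)) := by
        apply Finset.sum_congr rfl
        intro i hi
        have : i ≠ j := fun h => hj (h ▸ hi)
        simp [this]
      rw [this, add_comm (f _ - f _)]
      simp only [Function.update_self]
      push_cast
      linarith

/-- Sets on which the greedy step is possible are null. -/
lemma null_of_greedy {X : Type*} [NormedAddCommGroup X] [NormedSpace ℝ X]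
    (a b : ℝ) (hab : a < b) (f : ℝ → X) (x : X) (hf : HasRiemannIntegral f a b x)
    (D : Set ℝ) (hD : D ⊆ Icc a b) (c : ℝ) (hc : 0 < c)
    (H : ∀ S : X, ∀ᵐ t, t ∈ D → ∀ r > 0, ∃ s s' : ℝ, |s - t| < r ∧ |s' - t| < r ∧
      ‖S‖ + c ≤ ‖S + (f s - f s')‖) : volume D = 0 := by
  classical
  have hfin : volume D ≠ ⊤ := ((measure_mono hD).trans_lt (by simp)).ne
  by_contra hne
  have hpos : 0 < (volume D).toReal := ENNReal.toReal_pos hne hfin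
  obtain ⟨δ, hδ, hP⟩ := hf ((volume D).toReal * c / 2) (by positivity)
  obtain ⟨n, hn⟩ := exists_nat_gt ((b - a) / δ)
  have hba : 0 < b - a := sub_pos.2 hab
  have hn0 : (0 : ℝ) < n := lt_trans (by positivity) hn
  have hnpos : 0 < n := by exact_mod_cast hn0
  set h := (b - a) / n with hh
  have hhpos : 0 < h := by positivity
  have hhδ : h < δ := by
    rw [hh, div_lt_iff₀ hn0]
    rw [div_lt_iff₀ hδ] at hn
    linarith
  have hnh : n * h = b - a := by rw [hh]; field_simp
  let u : ℕ → ℝ := fun i => a + i * h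
  let v : ℕ → ℝ := fun i => a + (i + 1 : ℕ) * h
  have hvu : ∀ i, v i - u i = h := by intro i; simp only [u, v]; push_cast; ring
  have huv : ∀ i, u i < v i := fun i => by linarith [hvu i]
  let G := (Finset.range n).filter (fun i => volume (D ∩ Icc (u i) (v i)) ≠ 0)
  obtain ⟨s, s', h1, h2, h3, h4⟩ := greedy_choice f D c H u v huv G
    (fun i hi => (Finset.mem_filter.1 hi).2)
  let P := unifPart a b hab n hnpos s (fun i _ => h1 i)
  let Q := unifPart a b hab n hnpos s' (fun i _ => h2 i)
  have hPd := hP P (fun i _ => (hvu i).trans_lt hhδ)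
  have hQd := hP Q (fun i _ => (hvu i).trans_lt hhδ)
  have hdist : dist (riemannSum f P) (riemannSum f Q) < (volume D).toReal * c := by
    have := dist_triangle_right (riemannSum f P) (riemannSum f Q) x
    linarith
  have hP' : riemannSum f P = ∑ i ∈ Finset.range n, h • f (s i) :=
    Finset.sum_congr rfl (fun i _ => congrArg (· • f (s i)) (hvu i))
  have hQ' : riemannSum f Q = ∑ i ∈ Finset.range n, h • f (s' i) :=
    Finset.sum_congr rfl (fun i _ => congrArg (· • f (s' i)) (hvu i))
  have hsub : riemannSum f P - riemannSum f Q = h • ∑ i ∈ G, (f (s i) - f (s' i)) := by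
    rw [hP', hQ', ← Finset.sum_sub_distrib, Finset.smul_sum]
    symm
    rw [Finset.sum_subset (Finset.filter_subset _ _ : G ⊆ Finset.range n)]
    · exact Finset.sum_congr rfl (fun i _ => smul_sub _ _ _)
    · intro i _ hi
      simp [h3 i hi]
  have hcov : D ⊆ ⋃ i ∈ Finset.range n, (D ∩ Icc (u i) (v i)) := by
    intro t ht
    have htI := hD ht
    simp only [mem_iUnion, Finset.mem_range]
    by_cases htb : t = b
    · refine ⟨n - 1, by omega, ht, ?_⟩
      have : ((n - 1 : ℕ) : ℝ) = n - 1 := by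
        rw [Nat.cast_sub (by omega)]; simp
      constructor
      · simp only [u]; rw [this]; nlinarith
      · simp only [v]; push_cast; rw [this]; nlinarith
    · have htlt : t < b := lt_of_le_of_ne htI.2 htb
      have h0 : 0 ≤ (t - a) / h := div_nonneg (sub_nonneg.2 htI.1) hhpos.le
      refine ⟨⌊(t - a) / h⌋₊, ?_, ht, ?_, ?_⟩
      · rw [Nat.floor_lt h0, div_lt_iff₀ hhpos]; linarith
      · have := Nat.floor_le h0
        rw [le_div_iff₀ hhpos] at this
        simp only [u]; linarith
      · have := Nat.lt_floor_add_one ((t - a) / h)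
        rw [div_lt_iff₀ hhpos] at this
        simp only [v]; push_cast; linarith
  have hvol : volume D ≤ ENNReal.ofReal (G.card * h) := by
    calc volume D ≤ ∑ i ∈ Finset.range n, volume (D ∩ Icc (u i) (v i)) :=
          (measure_mono hcov).trans (measure_biUnion_finset_le _ _)
      _ = ∑ i ∈ G, volume (D ∩ Icc (u i) (v i)) := by
          symm
          apply Finset.sum_subset (Finset.filter_subset _ _)
          intro i hi hiG
          by_contra hne
          exact hiG (Finset.mem_filter.2 ⟨hi, hne⟩)
      _ ≤ ∑ i ∈ G, ENNReal.ofReal h := by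
          apply Finset.sum_le_sum
          intro i _
          refine (measure_mono inter_subset_right).trans ?_
          rw [Real.volume_Icc, hvu]
      _ = ENNReal.ofReal (G.card * h) := by
          rw [Finset.sum_const, nsmul_eq_mul, ENNReal.ofReal_mul (by positivity),
            ENNReal.ofReal_natCast]
  have hvol' : (volume D).toReal ≤ G.card * h :=
    ENNReal.toReal_le_of_le_ofReal (by positivity) hvol
  rw [dist_eq_norm, hsub, norm_smul, Real.norm_of_nonneg hhpos.le] at hdist
  nlinarith [mul_le_mul_of_nonneg_left h4 hhpos.le, mul_le_mul_of_nonneg_right hvol' hc.le]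

/-- Points where the oscillation is at least `c`. -/
def oscSet {X : Type*} [NormedAddCommGroup X] (f : ℝ → X) (a b c : ℝ) : Set ℝ :=
  {t ∈ Icc a b | ∀ r > 0, ∃ s ∈ Icc a b, |s - t| < r ∧ c ≤ ‖f s - f t‖}

lemma null_of_oscSet {X : Type*} [NormedAddCommGroup X] (f : ℝ → X) (a b : ℝ)
    (h : ∀ c > 0, volume (oscSet f a b c) = 0) :
    volume {t ∈ Set.Icc a b | ¬ ContinuousWithinAt f (Set.Icc a b) t} = 0 := by
  have : {t ∈ Set.Icc a b | ¬ ContinuousWithinAt f (Set.Icc a b) t} ⊆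
      ⋃ k : ℕ, oscSet f a b (1 / ((k : ℝ) + 1)) := by
    rintro t ⟨ht, hc⟩
    rw [Metric.continuousWithinAt_iff] at hc
    push Not at hc
    obtain ⟨ε, hε, hc⟩ := hc
    obtain ⟨k, hk⟩ := exists_nat_one_div_lt hε
    refine mem_iUnion.2 ⟨k, ht, fun r hr => ?_⟩
    obtain ⟨s, hs, hd, hle⟩ := hc r hr
    rw [Real.dist_eq] at hd
    rw [dist_eq_norm] at hle
    exact ⟨s, hs, hd, hk.le.trans hle⟩
  refine measure_mono_null this (measure_iUnion_null fun k => h _ (by positivity))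

lemma real_lebesgue (a b : ℝ) (hab : a < b) (f : ℝ → ℝ) (x : ℝ)
    (hf : HasRiemannIntegral f a b x) :
    volume {t ∈ Set.Icc a b | ¬ ContinuousWithinAt f (Set.Icc a b) t} = 0 := by
  apply null_of_oscSet
  intro c hc
  refine null_of_greedy a b hab f x hf _ (fun t ht => ht.1) c hc ?_
  intro S
  refine Filter.Eventually.of_forall ?_
  rintro t ⟨ht, h⟩ r hr
  obtain ⟨s, -, hs, hcs⟩ := h r hr
  have ht0 : |t - t| < r := by simpa using hr
  simp only [Real.norm_eq_abs] at *
  rcases le_total 0 S with hS | hS <;> rcases le_total 0 (f s - f t) with hx | hx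
  · refine ⟨s, t, hs, ht0, ?_⟩
    rw [abs_of_nonneg hx] at hcs
    rw [abs_of_nonneg hS, abs_of_nonneg (by linarith)]; linarith
  · refine ⟨t, s, ht0, hs, ?_⟩
    rw [abs_of_nonpos hx] at hcs
    rw [abs_of_nonneg hS, abs_of_nonneg (by linarith)]; linarith
  · refine ⟨t, s, ht0, hs, ?_⟩
    rw [abs_of_nonneg hx] at hcs
    rw [abs_of_nonpos hS, abs_of_nonpos (by linarith)]; linarith
  · refine ⟨s, t, hs, ht0, ?_⟩
    rw [abs_of_nonpos hx] at hcs
    rw [abs_of_nonpos hS, abs_of_nonpos (by linarith)]; linarith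

lemma l1_hasSum {Γ : Type*} (y : lp (fun _ : Γ => ℝ) 1) :
    HasSum (fun i => |y i|) ‖y‖ := by
  have := lp.hasSum_norm (p := 1) (by simp) y
  simpa using this

lemma l1_almost_disjoint {Γ : Type*} (S y : lp (fun _ : Γ => ℝ) 1) (F : Finset Γ) :
    ‖S‖ + ‖y‖ ≤ ‖S + y‖ + 2 * ∑ i ∈ F, |y i| + 2 * (‖S‖ - ∑ i ∈ F, |S i|) := by
  classical
  have key : ∀ z : lp (fun _ : Γ => ℝ) 1,
      HasSum (fun i => if i ∈ F then |z i| else 0) (∑ i ∈ F, |z i|) := by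
    intro z
    have h := hasSum_sum_of_ne_finset_zero (s := F) (L := SummationFilter.unconditional Γ)
      (f := fun i => if i ∈ F then |z i| else 0) (by intro i hi; simp [hi])
    rwa [Finset.sum_congr rfl (fun i hi => by simp [hi] : ∀ i ∈ F, _ = |z i|)] at h
  refine hasSum_le ?_ ((l1_hasSum S).add (l1_hasSum y))
    (((l1_hasSum (S + y)).add ((key y).mul_left 2)).add
      (((l1_hasSum S).sub (key S)).mul_left 2))
  intro i
  have e : (S + y) i = S i + y i := rfl
  simp only [e]
  have t1 : |S i| ≤ |S i + y i| + |y i| := by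
    have := abs_sub (S i + y i) (y i); simpa using this
  have t2 : |y i| ≤ |S i + y i| + |S i| := by
    have := abs_sub (S i + y i) (S i); simpa using this
  split_ifs <;> linarith

/-- `ℓ¹(Γ)` for an uncountable index set `Γ` has the Lebesgue
property. -/
theorem l1Gamma_lebesgueProperty (Γ : Type*) [Uncountable Γ]
    [Fact (1 ≤ (1 : ENNReal))] :
    LebesgueProperty (lp (fun _ : Γ => ℝ) 1) := by
  rintro a b hab f ⟨x, hf⟩
  have hcoord : ∀ γ : Γ, ∀ᵐ t, t ∈ Icc a b →
      ContinuousWithinAt (fun s => f s γ) (Icc a b) t := by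
    intro γ
    have hr : HasRiemannIntegral (fun s => f s γ) a b (x γ) := by
      intro ε hε
      obtain ⟨δ, hδ, h⟩ := hf ε hε
      refine ⟨δ, hδ, fun P hP => lt_of_le_of_lt ?_ (h P hP)⟩
      rw [dist_eq_norm, dist_eq_norm]
      have e : riemannSum (fun s => f s γ) P - x γ = (riemannSum f P - x) γ := by
        simp [riemannSum]
        erw [Finset.sum_apply]
        rfl
      rw [e]
      exact lp.norm_apply_le_norm (by simp) _ γ
    have := real_lebesgue a b hab _ _ hr
    rw [ae_iff]
    simpa only [Classical.not_imp] using this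
  apply null_of_oscSet
  intro c hc
  refine null_of_greedy a b hab f x hf _ (fun t ht => ht.1) (c / 2) (by positivity) ?_
  intro S
  obtain ⟨F, hF⟩ : ∃ F : Finset Γ, ‖S‖ - c / 8 < ∑ i ∈ F, |S i| :=
    ((l1_hasSum S).eventually (lt_mem_nhds (by linarith))).exists
  have hall : ∀ᵐ t, ∀ γ ∈ F, t ∈ Icc a b →
      ContinuousWithinAt (fun s => f s γ) (Icc a b) t :=
    (Filter.eventually_all_finset F).2 (fun γ _ => hcoord γ)
  filter_upwards [hall] with t hcont ht r hr
  have hsum : ContinuousWithinAt (fun s => ∑ i ∈ F, |f s i - f t i|) (Icc a b) t := by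
    apply tendsto_finsetSum
    intro i hi
    exact ((hcont i hi ht.1).sub continuousWithinAt_const).abs
  rw [Metric.continuousWithinAt_iff] at hsum
  obtain ⟨ρ, hρ, hs⟩ := hsum (c / 8) (by positivity)
  obtain ⟨s, hsI, hsr, hsc⟩ := ht.2 (min r ρ) (lt_min hr hρ)
  refine ⟨s, t, lt_of_lt_of_le hsr (min_le_left _ _), by simpa using hr, ?_⟩
  have h1 := hs hsI (lt_of_lt_of_le hsr (min_le_right _ _))
  simp only [sub_self, abs_zero, Finset.sum_const_zero, Real.dist_eq, sub_zero] at h1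
  have h2 := l1_almost_disjoint S (f s - f t) F
  have e : ∑ i ∈ F, |(f s - f t) i| = ∑ i ∈ F, |f s i - f t i| := rfl
  rw [e] at h2
  have h3 := (abs_lt.1 h1).2
  linarith
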